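/- arXiv:2511.09417 — 6 statements merged into one kernel-verified Lean document; each statement's English description precedes it below -/
import Mathlib

section
/- Convexity of the weight-based measure: for every m, n ≥ 1, every p ∈ [0,1], and all states J₁, J₂ on ℂ^m ⊗ ℂ^n, one has C_w(p·J₁ + (1−p)·J₂) ≤ p·C_w(J₁) + (1−p)·C_w(J₂). -/
/-!
The function `Cw` is an infimum over the feasible parameters `s`, so it suffices that feasibility
is jointly convex in `(J, s)` and that every state has a feasible parameter. If
`J₁ - (1 - s₁) σ₁` and `J₂ - (1 - s₂) σ₂` are positive semidefinite, then so is
`p J₁ + (1 - p) J₂ - (a σ₁ + b σ₂)` with `a = p (1 - s₁)` and `b = (1 - p) (1 - s₂)`. As separable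
states form a convex set, `a σ₁ + b σ₂ = (a + b) σ` for a separable `σ`, and
`a + b = 1 - (p s₁ + (1 - p) s₂)` (`CwFeasible.convex`). The parameter `s = 1` is feasible for
every state, since separable states exist (`CwFeasible.one`). Choosing `s₁`, `s₂` within `ε` of the
two infima and letting `ε → 0` gives the inequality.
-/

open Matrix BigOperators
open scoped ComplexOrder

/-- A quantum state: positive semidefinite matrix of trace 1. -/
def MatState {ι : Type*} [Fintype ι] (ρ : Matrix ι ι ℂ) : Prop :=
  ρ.PosSemidef ∧ ρ.trace = 1

/-- A separable state on a bipartite system `A ⊗ B`: a finite convex combination of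
Kronecker products of states. -/
def SepState {A B : Type*} [Fintype A] [Fintype B]
    (σ : Matrix (A × B) (A × B) ℂ) : Prop :=
  ∃ (k : ℕ) (p : Fin k → ℝ) (ρ : Fin k → Matrix A A ℂ) (τ : Fin k → Matrix B B ℂ),
    (∀ i, 0 ≤ p i) ∧ (∑ i, p i = 1) ∧ (∀ i, MatState (ρ i)) ∧ (∀ i, MatState (τ i)) ∧
    σ = ∑ i, (p i : ℂ) • Matrix.kroneckerMap (· * ·) (ρ i) (τ i)

/-- The weight-based measure of a bipartite state `J`:
`C_w(J) = inf { s ∈ [0,1] : ∃ separable state σ, J - (1-s)·σ ⪰ 0 }`. -/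
noncomputable def Cw {A B : Type*} [Fintype A] [Fintype B]
    (J : Matrix (A × B) (A × B) ℂ) : ℝ :=
  sInf {s : ℝ | 0 ≤ s ∧ s ≤ 1 ∧ ∃ σ, SepState σ ∧
    (J - (((1 - s : ℝ) : ℂ)) • σ).PosSemidef}

lemma MatState.exists_fin {n : ℕ} (hn : 1 ≤ n) : ∃ ρ : Matrix (Fin n) (Fin n) ℂ, MatState ρ := by
  refine ⟨Matrix.diagonal (Pi.single ⟨0, hn⟩ 1), Matrix.PosSemidef.diagonal ?_, ?_⟩
  · rw [Pi.single_nonneg]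
    exact zero_le_one
  · simp [Matrix.trace_diagonal]

section

variable {A B : Type*} [Fintype A] [Fintype B]

lemma SepState.kronecker {ρ : Matrix A A ℂ} {τ : Matrix B B ℂ} (hρ : MatState ρ)
    (hτ : MatState τ) : SepState (Matrix.kroneckerMap (· * ·) ρ τ) :=
  ⟨1, fun _ => 1, fun _ => ρ, fun _ => τ, by simp, by simp, fun _ => hρ, fun _ => hτ, by simp⟩

lemma SepState.convex {σ₁ σ₂ : Matrix (A × B) (A × B) ℂ} (h₁ : SepState σ₁) (h₂ : SepState σ₂)
    {a b : ℝ} (ha : 0 ≤ a) (hb : 0 ≤ b) (hab : a + b = 1) :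
    SepState ((a : ℂ) • σ₁ + (b : ℂ) • σ₂) := by
  obtain ⟨k, p, ρ, τ, hp, hps, hρ, hτ, rfl⟩ := h₁
  obtain ⟨l, q, ρ', τ', hq, hqs, hρ', hτ', rfl⟩ := h₂
  -- Concatenate the two decompositions, with weights scaled by `a` and `b`.
  refine ⟨k + l, Fin.append (fun i => a * p i) (fun i => b * q i), Fin.append ρ ρ',
    Fin.append τ τ', ?_, ?_, ?_, ?_, ?_⟩
  · exact Fin.addCases (by simpa using fun i => mul_nonneg ha (hp i))
      (by simpa using fun i => mul_nonneg hb (hq i))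
  · simp [Fin.sum_univ_add, ← Finset.mul_sum, hps, hqs, hab]
  · exact Fin.addCases (by simpa using hρ) (by simpa using hρ')
  · exact Fin.addCases (by simpa using hτ) (by simpa using hτ')
  · simp [Fin.sum_univ_add, Finset.smul_sum, smul_smul]

/-- The cone generated by the separable states is closed under addition. -/
lemma SepState.exists_smul_eq_add {σ₁ σ₂ : Matrix (A × B) (A × B) ℂ} (h₁ : SepState σ₁)
    (h₂ : SepState σ₂) {a b : ℝ} (ha : 0 ≤ a) (hb : 0 ≤ b) :
    ∃ σ, SepState σ ∧ ((a + b : ℝ) : ℂ) • σ = (a : ℂ) • σ₁ + (b : ℂ) • σ₂ := by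
  rcases (add_nonneg ha hb).eq_or_lt with h | h
  · -- Both coefficients vanish, so any separable state will do.
    obtain rfl : a = 0 := by linarith
    obtain rfl : b = 0 := by linarith
    exact ⟨σ₁, h₁, by simp⟩
  · refine ⟨_, h₁.convex h₂ (div_nonneg ha h.le) (div_nonneg hb h.le)
      (by rw [← add_div, div_self h.ne']), ?_⟩
    rw [smul_add, smul_smul, smul_smul, ← Complex.ofReal_mul, ← Complex.ofReal_mul,
      mul_div_cancel₀ _ h.ne', mul_div_cancel₀ _ h.ne']

/-- The parameter `s` belongs to the set whose infimum is `Cw J`. -/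
def CwFeasible (J : Matrix (A × B) (A × B) ℂ) (s : ℝ) : Prop :=
  0 ≤ s ∧ s ≤ 1 ∧ ∃ σ, SepState σ ∧ (J - (((1 - s : ℝ) : ℂ)) • σ).PosSemidef

lemma CwFeasible.one {J σ : Matrix (A × B) (A × B) ℂ} (hJ : MatState J) (hσ : SepState σ) :
    CwFeasible J 1 :=
  ⟨zero_le_one, le_rfl, σ, hσ, by simpa using hJ.1⟩

lemma CwFeasible.convex {J₁ J₂ : Matrix (A × B) (A × B) ℂ} {s₁ s₂ : ℝ} (h₁ : CwFeasible J₁ s₁)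
    (h₂ : CwFeasible J₂ s₂) {p : ℝ} (hp0 : 0 ≤ p) (hp1 : p ≤ 1) :
    CwFeasible ((p : ℂ) • J₁ + ((1 - p : ℝ) : ℂ) • J₂) (p * s₁ + (1 - p) * s₂) := by
  obtain ⟨h01, h11, σ₁, hσ₁, hP₁⟩ := h₁
  obtain ⟨h02, h12, σ₂, hσ₂, hP₂⟩ := h₂
  have hq : 0 ≤ 1 - p := sub_nonneg.2 hp1
  obtain ⟨σ, hσ, hσe⟩ := hσ₁.exists_smul_eq_add hσ₂ (mul_nonneg hp0 (sub_nonneg.2 h11))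
    (mul_nonneg hq (sub_nonneg.2 h12))
  refine ⟨by positivity, by nlinarith, σ, hσ, ?_⟩
  have hP := (hP₁.smul (Complex.zero_le_real.2 hp0)).add (hP₂.smul (Complex.zero_le_real.2 hq))
  have hs : 1 - (p * s₁ + (1 - p) * s₂) = p * (1 - s₁) + (1 - p) * (1 - s₂) := by ring
  rw [hs, hσe]
  convert hP using 1
  simp only [smul_sub, smul_smul, Complex.ofReal_mul]
  abel

lemma Cw_le {J : Matrix (A × B) (A × B) ℂ} {s : ℝ} (h : CwFeasible J s) : Cw J ≤ s :=
  csInf_le ⟨0, fun _ ht => ht.1⟩ h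

/-- Some feasible `t` must be given, since the infimum of the empty set is the junk value `0`. -/
lemma CwFeasible.exists_lt_add {J : Matrix (A × B) (A × B) ℂ} {t : ℝ} (h : CwFeasible J t)
    {ε : ℝ} (hε : 0 < ε) : ∃ s, CwFeasible J s ∧ s < Cw J + ε :=
  Real.lt_sInf_add_pos ⟨t, h⟩ hε

end

/-- Convexity of the weight-based measure. -/
theorem weight_measure_convex {m n : ℕ} (hm : 1 ≤ m) (hn : 1 ≤ n)
    (p : ℝ) (hp0 : 0 ≤ p) (hp1 : p ≤ 1)
    (J₁ J₂ : Matrix (Fin m × Fin n) (Fin m × Fin n) ℂ)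
    (h₁ : MatState J₁) (h₂ : MatState J₂) :
    Cw ((p : ℂ) • J₁ + ((1 - p : ℝ) : ℂ) • J₂) ≤ p * Cw J₁ + (1 - p) * Cw J₂ := by
  obtain ⟨ρ, hρ⟩ := MatState.exists_fin hm
  obtain ⟨τ, hτ⟩ := MatState.exists_fin hn
  have hσ := SepState.kronecker hρ hτ
  refine le_of_forall_pos_le_add fun ε hε => ?_
  obtain ⟨s₁, hs₁, hl₁⟩ := (CwFeasible.one h₁ hσ).exists_lt_add hε
  obtain ⟨s₂, hs₂, hl₂⟩ := (CwFeasible.one h₂ hσ).exists_lt_add hε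
  calc Cw ((p : ℂ) • J₁ + ((1 - p : ℝ) : ℂ) • J₂)
      ≤ p * s₁ + (1 - p) * s₂ := Cw_le (hs₁.convex hs₂ hp0 hp1)
    _ ≤ p * (Cw J₁ + ε) + (1 - p) * (Cw J₂ + ε) :=
        add_le_add (mul_le_mul_of_nonneg_left hl₁.le hp0)
          (mul_le_mul_of_nonneg_left hl₂.le (sub_nonneg.2 hp1))
    _ = p * Cw J₁ + (1 - p) * Cw J₂ + ε := by ring
end

section
/- Selective monotonicity of the weight-based measure: let Π_x (x = 1,…,N) be finitely many linear maps from complex matrices indexed by Fin m × Fin n to complex matrices indexed by Fin m' × Fin n', such that (i) each Π_x maps positive semidefinite matrices to positive semidefinite matrices, (ii) each Π_x maps every separable state on ℂ^m ⊗ ℂ^n to a nonnegative scalar multiple of a separable state on ℂ^{m'} ⊗ ℂ^{n'}, and (iii) for every matrix A, Σ_x Tr[Π_x(A)] = Tr[A]. Let J be a state on ℂ^m ⊗ ℂ^n and set p_x = Tr[Π_x(J)] (a nonnegative real). If p_x > 0 for all x, then Σ_x p_x · C_w(Π_x(J)/p_x) ≤ C_w(J). -/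
/-!
Let `s` be feasible for `C_w(J)`, with separable witness `σ`, and write `T x σ = c x • σ' x` with
`σ' x` separable. Applying the positive map `T x` to `J - (1 - s) σ ⪰ 0` gives
`T x J ⪰ (1 - s) c x • σ' x`; dividing by `p x`, the number `1 - (1 - s) c x / p x` is feasible
for the normalised outcome. It is nonnegative because the trace of a positive semidefinite matrix
is nonnegative. Trace preservation gives `∑ p x = 1 = ∑ c x`, so the average of these
feasible values with weights `p x` is exactly `s`. Taking the infimum over `s` concludes; the
feasible set for `J` is nonempty because it contains `s = 1`.
-/

open Matrix BigOperators
open scoped ComplexOrder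

theorem SepState.trace_eq_one {A B : Type*} [Fintype A] [Fintype B]
    {σ : Matrix (A × B) (A × B) ℂ} (h : SepState σ) : σ.trace = 1 := by
  obtain ⟨k, p, ρ, τ, -, hp1, hρ, hτ, rfl⟩ := h
  have hk : ∀ i, (kroneckerMap (· * ·) (ρ i) (τ i)).trace = 1 := fun i => by
    have := trace_kronecker (ρ i) (τ i)
    rw [(hρ i).2, (hτ i).2, mul_one] at this
    exact this
  simp only [trace_sum, trace_smul, hk, smul_eq_mul, mul_one]
  exact_mod_cast hp1

theorem exists_matState (ι : Type*) [Fintype ι] [Nonempty ι] :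
    ∃ ρ : Matrix ι ι ℂ, MatState ρ := by
  classical
  obtain ⟨i⟩ := ‹Nonempty ι›
  refine ⟨diagonal (Pi.single i 1), PosSemidef.diagonal ?_, ?_⟩
  · rw [Pi.single_nonneg]
    exact zero_le_one
  · simp [trace_diagonal]

theorem exists_sepState (A B : Type*) [Fintype A] [Fintype B] [Nonempty A] [Nonempty B] :
    ∃ σ : Matrix (A × B) (A × B) ℂ, SepState σ := by
  obtain ⟨ρ, hρ⟩ := exists_matState A
  obtain ⟨τ, hτ⟩ := exists_matState B
  exact ⟨_, 1, fun _ => 1, fun _ => ρ, fun _ => τ, fun _ => zero_le_one, by simp,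
    fun _ => hρ, fun _ => hτ, rfl⟩

theorem MatState.nonempty {ι : Type*} [Fintype ι] {ρ : Matrix ι ι ℂ} (h : MatState ρ) :
    Nonempty ι := by
  by_contra hι
  rw [not_nonempty_iff] at hι
  have := h.2
  simp [Matrix.trace] at this

theorem Cw_le_s1 {A B : Type*} [Fintype A] [Fintype B] {J σ : Matrix (A × B) (A × B) ℂ} {s : ℝ}
    (h0 : 0 ≤ s) (h1 : s ≤ 1) (hσ : SepState σ)
    (h : (J - (((1 - s : ℝ) : ℂ)) • σ).PosSemidef) : Cw J ≤ s :=
  csInf_le ⟨0, fun _ ht => ht.1⟩ ⟨h0, h1, σ, hσ, h⟩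

/-- An unnormalised operator `K` of trace `p > 0` that dominates `q • σ`, with `σ` separable and
`q ≥ 0`, satisfies `p * C_w(K / p) ≤ p - q`. -/
theorem mul_Cw_le {A B : Type*} [Fintype A] [Fintype B] {K σ : Matrix (A × B) (A × B) ℂ}
    {p q : ℝ} (hp : 0 < p) (hq : 0 ≤ q) (hK : K.trace = (p : ℂ)) (hσ : SepState σ)
    (h : (K - (q : ℂ) • σ).PosSemidef) :
    p * Cw (((p⁻¹ : ℝ) : ℂ) • K) ≤ p - q := by
  have hqp : q ≤ p := by
    have ht := h.trace_nonneg
    rw [trace_sub, trace_smul, hK, hσ.trace_eq_one, smul_eq_mul, mul_one] at ht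
    exact_mod_cast sub_nonneg.mp ht
  have hs : Cw (((p⁻¹ : ℝ) : ℂ) • K) ≤ 1 - p⁻¹ * q := by
    refine Cw_le_s1 ?_ ?_ hσ ?_
    · rw [sub_nonneg, inv_mul_le_one₀ hp]
      exact hqp
    · have : 0 ≤ p⁻¹ * q := by positivity
      linarith
    · have hc : (0 : ℂ) ≤ ((p⁻¹ : ℝ) : ℂ) := by exact_mod_cast (inv_pos.mpr hp).le
      have := h.smul hc
      rwa [smul_sub, smul_smul, ← Complex.ofReal_mul, ← sub_sub_cancel 1 (p⁻¹ * q)] at this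
  calc p * Cw (((p⁻¹ : ℝ) : ℂ) • K) ≤ p * (1 - p⁻¹ * q) :=
        mul_le_mul_of_nonneg_left hs hp.le
    _ = p - q := by field_simp

/-- Selective monotonicity of the weight-based measure under a finite family
of positivity-preserving, separability-preserving, jointly trace-preserving maps. -/
theorem weight_measure_selective_monotone {m n m' n' N : ℕ}
    (T : Fin N → (Matrix (Fin m × Fin n) (Fin m × Fin n) ℂ →ₗ[ℂ]
        Matrix (Fin m' × Fin n') (Fin m' × Fin n') ℂ))
    (hpos : ∀ x A, A.PosSemidef → (T x A).PosSemidef)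
    (hsep : ∀ x σ, SepState σ → ∃ (c : ℝ) (σ' : Matrix (Fin m' × Fin n') (Fin m' × Fin n') ℂ),
        0 ≤ c ∧ SepState σ' ∧ T x σ = (c : ℂ) • σ')
    (htr : ∀ A, ∑ x, (T x A).trace = A.trace)
    (J : Matrix (Fin m × Fin n) (Fin m × Fin n) ℂ) (hJ : MatState J)
    (p : Fin N → ℝ) (hp : ∀ x, (T x J).trace = (p x : ℂ))
    (hppos : ∀ x, 0 < p x) :
    ∑ x, p x * Cw ((((p x)⁻¹ : ℝ) : ℂ) • T x J) ≤ Cw J := by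
  obtain ⟨⟨a, b⟩⟩ := hJ.nonempty
  have : Nonempty (Fin m) := ⟨a⟩
  have : Nonempty (Fin n) := ⟨b⟩
  have hpsum : ∑ x, p x = 1 := by
    have := htr J
    simp only [hp, hJ.2] at this
    exact_mod_cast this
  refine le_csInf ?_ ?_
  · obtain ⟨σ, hσ⟩ := exists_sepState (Fin m) (Fin n)
    exact ⟨1, zero_le_one, le_rfl, σ, hσ, by simpa using hJ.1⟩
  · rintro s ⟨-, hs1, σ, hσ, hpsd⟩
    choose c σ' hc hσ' hT using fun x => hsep x σ hσ
    have hcsum : ∑ x, c x = 1 := by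
      have := htr σ
      simp only [hT, trace_smul, (hσ' _).trace_eq_one, hσ.trace_eq_one, smul_eq_mul,
        mul_one] at this
      exact_mod_cast this
    calc ∑ x, p x * Cw ((((p x)⁻¹ : ℝ) : ℂ) • T x J)
        ≤ ∑ x, (p x - (1 - s) * c x) := by
          refine Finset.sum_le_sum fun x _ => ?_
          refine mul_Cw_le (hppos x) (mul_nonneg (sub_nonneg.mpr hs1) (hc x)) (hp x) (hσ' x) ?_
          have := hpos x _ hpsd
          rwa [map_sub, map_smul, hT, smul_smul, ← Complex.ofReal_mul] at this
      _ = s := by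
          rw [Finset.sum_sub_distrib, ← Finset.mul_sum, hpsum, hcsum]
          ring
end

section
/- Maximal overlap of separable states with a maximally entangled state: let d ≥ 1, let U be a d×d unitary matrix, and let ψ_U = (1/√d) Σ_{i ∈ Fin d} e_i ⊗ (U e_i) ∈ ℂ^d ⊗ ℂ^d. Then for every separable state σ on ℂ^d ⊗ ℂ^d one has ⟨ψ_U, σ ψ_U⟩ ≤ 1/d, and there exists a separable state σ achieving ⟨ψ_U, σ ψ_U⟩ = 1/d; hence sup over separable states σ of ⟨ψ_U, σ ψ_U⟩ equals 1/d, i.e., the geometric measure of entanglement of ψ_U is 1 − 1/d. -/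
/-!
For a product state `ρ ⊗ τ` the overlap with `ψ_U` is `(1/d) ∑ i j, ρ i j * τ' i j`, where
`τ' = Uᴴ τ U` is again a state (`overlap_kronecker`, `MatState.conj`). For positive semidefinite
`A` and `B` the sum `∑ i j, A i j * B i j` is at most `tr A * tr B` (`sum_mul_le_trace_mul_trace`):
testing the positive semidefinite matrix `A ⊗ Bᵀ` against `e_i ⊗ e_j - e_j ⊗ e_i` gives
`A i j * B i j + A j i * B j i ≤ A i i * B j j + A j j * B i i`, and this is summed over `i, j`.
So a product state has overlap at most `1/d`, and by linearity so does every convex combination.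
The product state of `e` and `U e`, for a standard basis vector `e`, has `τ' = ρ` and attains
the bound.
-/

open Matrix BigOperators
open scoped ComplexOrder

/-- The maximally entangled state vector `ψ_U = (1/√d) Σ_i e_i ⊗ (U e_i)` associated with
a `d × d` matrix `U`; its `(k, l)` coordinate is `(1/√d)·U_{l k}`. -/
noncomputable def psiU {d : ℕ} (U : Matrix (Fin d) (Fin d) ℂ) : Fin d × Fin d → ℂ :=
  fun p => (1 / (Real.sqrt d : ℂ)) * U p.2 p.1

/-- The trace inequality `tr (A Bᵀ) ≤ tr A * tr B` for positive semidefinite matrices. -/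
lemma sum_mul_le_trace_mul_trace {n : Type*} [Fintype n] {A B : Matrix n n ℂ}
    (hA : A.PosSemidef) (hB : B.PosSemidef) :
    ∑ i, ∑ j, A i j * B i j ≤ A.trace * B.trace := by
  classical
  have key : ∀ i j, 0 ≤ A i i * B j j + A j j * B i i - A i j * B i j - A j i * B j i := by
    intro i j
    have h := (hA.kronecker hB.transpose).dotProduct_mulVec_nonneg
      (Pi.single (i, j) 1 - Pi.single (j, i) 1)
    simp only [star_sub, Pi.star_single, star_one, mulVec_sub, mulVec_single_one,
      sub_dotProduct, dotProduct_sub, single_one_dotProduct, col_apply, kroneckerMap_apply,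
      transpose_apply] at h
    convert h using 1
    ring
  have hsum : 0 ≤ ∑ i, ∑ j, (A i i * B j j + A j j * B i i - A i j * B i j - A j i * B j i) :=
    Finset.sum_nonneg fun i _ => Finset.sum_nonneg fun j _ => key i j
  have e1 : ∑ i, ∑ j, A i i * B j j = A.trace * B.trace := by
    simp [trace, Finset.sum_mul_sum]
  have e2 : ∑ i, ∑ j, A j j * B i i = A.trace * B.trace := by
    rw [Finset.sum_comm, e1]
  have e3 : ∑ i, ∑ j, A j i * B j i = ∑ i, ∑ j, A i j * B i j := Finset.sum_comm
  simp only [Finset.sum_sub_distrib, Finset.sum_add_distrib, e1, e2, e3] at hsum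
  have h2 : (0 : ℂ) ≤ 2 * (A.trace * B.trace - ∑ i, ∑ j, A i j * B i j) := by
    convert hsum using 1
    ring
  exact sub_nonneg.mp (by simpa using mul_nonneg (show (0 : ℂ) ≤ 2⁻¹ by positivity) h2)

lemma MatState.conj {n : Type*} [Fintype n] [DecidableEq n] {τ U : Matrix n n ℂ}
    (h : MatState τ) (hU : U * Uᴴ = 1) : MatState (Uᴴ * τ * U) := by
  refine ⟨h.1.conjTranspose_mul_mul_same U, ?_⟩
  rw [trace_mul_comm, ← Matrix.mul_assoc, hU, Matrix.one_mul, h.2]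

lemma overlap_kronecker {d : ℕ} (U ρ τ : Matrix (Fin d) (Fin d) ℂ) :
    star (psiU U) ⬝ᵥ (kroneckerMap (· * ·) ρ τ *ᵥ psiU U)
      = (1 / d : ℂ) * ∑ i, ∑ j, ρ i j * (Uᴴ * τ * U) i j := by
  have hs : (1 / (Real.sqrt d : ℂ)) * (1 / (Real.sqrt d : ℂ)) = 1 / d := by
    rw [div_mul_div_comm, ← Complex.ofReal_mul, Real.mul_self_sqrt (Nat.cast_nonneg d)]
    simp
  -- Both sides are expanded over the indices `i, j` of `ρ` and `k, l` of `τ`.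
  have hR : ∀ i j, ρ i j * (Uᴴ * τ * U) i j
      = ∑ k, ∑ l, ρ i j * (star (U k i) * τ k l * U l j) := by
    intro i j
    simp only [Matrix.mul_apply, conjTranspose_apply, Finset.sum_mul, Finset.mul_sum]
    exact Finset.sum_comm
  simp only [hR, ← hs, dotProduct, mulVec, Fintype.sum_prod_type, Finset.mul_sum]
  refine Finset.sum_congr rfl fun i _ => ?_
  rw [Finset.sum_comm]
  refine Finset.sum_congr rfl fun j _ => Finset.sum_congr rfl fun k _ =>
    Finset.sum_congr rfl fun l _ => ?_
  simp only [psiU, Pi.star_apply, star_mul', kroneckerMap_apply]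
  have : star (1 / (Real.sqrt d : ℂ)) = 1 / (Real.sqrt d : ℂ) := by simp
  rw [this]
  ring

/-- the maximal overlap of separable states with the maximally entangled
state `ψ_U` is exactly `1/d`: every separable state has overlap at most `1/d`, and some
separable state attains it. -/
theorem max_overlap_sep_with_max_entangled {d : ℕ} (hd : 1 ≤ d)
    (U : Matrix (Fin d) (Fin d) ℂ) (hU : U ∈ Matrix.unitaryGroup (Fin d) ℂ) :
    IsGreatest {r : ℝ | ∃ σ : Matrix (Fin d × Fin d) (Fin d × Fin d) ℂ, SepState σ ∧
      ((star (psiU U)) ⬝ᵥ (σ *ᵥ psiU U)).re = r} (1 / d) := by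
  have hU1 : U * Uᴴ = 1 := mem_unitaryGroup_iff.mp hU
  have hU2 : Uᴴ * U = 1 := mem_unitaryGroup_iff'.mp hU
  constructor
  · let i₀ : Fin d := ⟨0, hd⟩
    let E : Matrix (Fin d) (Fin d) ℂ := single i₀ i₀ 1
    have hE : MatState E := by
      refine ⟨?_, trace_single_eq_same _ _⟩
      have : E = diagonal (Pi.single i₀ 1) := (diagonal_single i₀ 1).symm
      rw [this]
      exact PosSemidef.diagonal (Pi.single_nonneg.mpr zero_le_one)
    have hτ : MatState (U * E * Uᴴ) := by
      simpa using hE.conj (U := Uᴴ) (by simpa using hU2)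
    refine ⟨_, ⟨1, fun _ => 1, fun _ => E, fun _ => U * E * Uᴴ, by simp, by simp,
      fun _ => hE, fun _ => hτ, rfl⟩, ?_⟩
    have hback : Uᴴ * (U * E * Uᴴ) * U = E := by
      calc Uᴴ * (U * E * Uᴴ) * U = (Uᴴ * U) * E * (Uᴴ * U) := by simp only [Matrix.mul_assoc]
        _ = E := by rw [hU2, Matrix.one_mul, Matrix.mul_one]
    have hsum : ∑ i, ∑ j, E i j * E i j = 1 := by
      simp [E, single_apply, ite_and]
    simp only [Finset.univ_unique, Finset.sum_singleton, Complex.ofReal_one, one_smul]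
    rw [overlap_kronecker, hback, hsum, mul_one]
    have hc : (1 / d : ℂ) = ((1 / d : ℝ) : ℂ) := by push_cast; rfl
    rw [hc, Complex.ofReal_re]
  · rintro r ⟨σ, ⟨k, p, ρ, τ, hp, hp1, hρ, hτ, rfl⟩, rfl⟩
    have hterm : ∀ i, (star (psiU U) ⬝ᵥ
        (kroneckerMap (· * ·) (ρ i) (τ i) *ᵥ psiU U)).re ≤ 1 / d := by
      intro i
      have hτ' := (hτ i).conj hU1
      have h := sum_mul_le_trace_mul_trace (hρ i).1 hτ'.1
      rw [(hρ i).2, hτ'.2, mul_one] at h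
      have hre := (Complex.le_def.mp h).1
      rw [overlap_kronecker]
      have hc : (1 / d : ℂ) = ((1 / d : ℝ) : ℂ) := by push_cast; rfl
      rw [hc, Complex.re_ofReal_mul]
      exact mul_le_of_le_one_right (by positivity) hre
    rw [sum_mulVec, dotProduct_sum, Complex.re_sum]
    calc _ ≤ ∑ i, p i * (1 / d : ℝ) := Finset.sum_le_sum fun i _ => by
          rw [smul_mulVec, dotProduct_smul, smul_eq_mul, Complex.re_ofReal_mul]
          exact mul_le_mul_of_nonneg_left (hterm i) (hp i)
      _ = 1 / d := by rw [← Finset.sum_mul, hp1, one_mul]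
end

section
/- Weight-based measure of a unitary channel: let d ≥ 2, let U be a d×d unitary matrix, let ψ_U = (1/√d) Σ_{i ∈ Fin d} e_i ⊗ (U e_i) ∈ ℂ^d ⊗ ℂ^d, and let J = |ψ_U⟩⟨ψ_U| be the associated rank-one projector (the Choi state of the unitary channel ρ ↦ UρU†). Then C_w(J) = 1. -/
/-!
The infimum is over the singleton `{1}`. If `J - (1-s)σ ⪰ 0` with `s < 1` and `J = |ψ⟩⟨ψ|` pure,
then some product term `ρ ⊗ τ` of `σ`, scaled by a positive constant, is dominated by `J`
(`exists_product_le_of_sepState`). Such a `ρ ⊗ τ` annihilates the orthogonal complement of `ψ`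
(`row_proportional_of_le_pure`), so the rows of `ρ ⊗ τ` are proportional to `ψ^*`. As the rows of
a Kronecker product are themselves products, the coefficient matrix of `ψ` would have rank at most
one; for `ψ = ψ_U` this matrix is proportional to the unitary `U`, of rank `d ≥ 2`.
-/

open Matrix BigOperators
open scoped ComplexOrder

/-- If `c • M` with `c > 0` and `M ⪰ 0` is dominated by the pure `|ψ⟩⟨ψ|`, then every row of `M` is
proportional to `ψ^*`, stated as the vanishing of the two-by-two minors. -/
lemma row_proportional_of_le_pure {ι : Type*} [Fintype ι] [DecidableEq ι]
    (ψ : ι → ℂ) (M : Matrix ι ι ℂ) (hM : M.PosSemidef) (c : ℝ) (hc : 0 < c)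
    (h : (Matrix.vecMulVec ψ (star ψ) - (c : ℂ) • M).PosSemidef) (x y z : ι) :
    M z x * star (ψ y) = M z y * star (ψ x) := by
  -- `v` is orthogonal to `ψ`, hence `⟨v, M v⟩ ≤ 0`, hence `M v = 0`.
  set v : ι → ℂ := Pi.single x (star (ψ y)) - Pi.single y (star (ψ x)) with hv
  have hJ : Matrix.vecMulVec ψ (star ψ) *ᵥ v = 0 := by
    have : star ψ ⬝ᵥ v = 0 := by
      simp [hv, dotProduct_sub, mul_comm]
    rw [Matrix.vecMulVec_mulVec, this]
    simp
  have h1 := h.dotProduct_mulVec_nonneg v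
  have h2 := hM.dotProduct_mulVec_nonneg v
  rw [Matrix.sub_mulVec, hJ, Matrix.smul_mulVec, zero_sub, dotProduct_neg, dotProduct_smul,
    smul_eq_mul] at h1
  have hc' : (0 : ℂ) < (c : ℂ) := by exact_mod_cast hc
  have h3 : star v ⬝ᵥ M *ᵥ v = 0 := by
    have h4 : (c : ℂ) * (star v ⬝ᵥ M *ᵥ v) = 0 :=
      le_antisymm (neg_nonneg.mp h1) (mul_nonneg hc'.le h2)
    exact (mul_eq_zero.mp h4).resolve_left hc'.ne'
  have h5 := congrFun ((hM.dotProduct_mulVec_zero_iff v).mp h3) z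
  simpa [hv, Matrix.mulVec_sub, sub_eq_zero, mul_comm] using h5

/-- A matrix dominating a positive multiple of a separable state dominates a positive multiple of a
product state. -/
lemma exists_product_le_of_sepState {A B : Type*} [Fintype A] [Fintype B]
    (J σ : Matrix (A × B) (A × B) ℂ) (hσ : SepState σ) (c : ℝ) (hc : 0 < c)
    (h : (J - (c : ℂ) • σ).PosSemidef) :
    ∃ (c' : ℝ) (ρ : Matrix A A ℂ) (τ : Matrix B B ℂ), 0 < c' ∧ MatState ρ ∧ MatState τ ∧
      (J - (c' : ℂ) • Matrix.kroneckerMap (· * ·) ρ τ).PosSemidef := by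
  obtain ⟨k, p, ρ, τ, hp, hsum, hρ, hτ, rfl⟩ := hσ
  obtain ⟨i, -, hi⟩ : ∃ i ∈ Finset.univ, 0 < p i := by
    apply Finset.exists_lt_of_sum_lt (f := fun _ => (0 : ℝ))
    simp [hsum]
  refine ⟨c * p i, ρ i, τ i, mul_pos hc hi, hρ i, hτ i, ?_⟩
  have hrest : ((c : ℂ) • ∑ j ∈ Finset.univ.erase i,
      (p j : ℂ) • Matrix.kroneckerMap (· * ·) (ρ j) (τ j)).PosSemidef := by
    refine Matrix.PosSemidef.smul (Matrix.posSemidef_sum _ fun j _ => ?_) (by exact_mod_cast hc.le)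
    exact ((hρ j).1.kronecker (hτ j).1).smul (by exact_mod_cast hp j)
  convert h.add hrest using 1
  rw [← Finset.add_sum_erase _ _ (Finset.mem_univ i), smul_add, smul_smul]
  push_cast
  abel

lemma matState_single {n : Type*} [Fintype n] [DecidableEq n] (i : n) :
    MatState (Matrix.diagonal (Pi.single i (1 : ℂ))) := by
  refine ⟨Matrix.PosSemidef.diagonal ?_, ?_⟩
  · exact Pi.single_nonneg.mpr zero_le_one
  · simp [Matrix.trace_diagonal]

/-- the weight-based measure of a unitary channel (i.e. of the rank-one
projector onto `ψ_U`) equals 1. -/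
theorem weight_measure_unitary {d : ℕ} (hd : 2 ≤ d)
    (U : Matrix (Fin d) (Fin d) ℂ) (hU : U ∈ Matrix.unitaryGroup (Fin d) ℂ) :
    Cw (Matrix.of fun p q : Fin d × Fin d => psiU U p * (starRingEnd ℂ) (psiU U q)) = 1 := by
  have hJ : (Matrix.of fun p q : Fin d × Fin d => psiU U p * (starRingEnd ℂ) (psiU U q)) =
      Matrix.vecMulVec (psiU U) (star (psiU U)) := rfl
  rw [hJ, Cw]
  refine (congrArg sInf ?_).trans (csInf_singleton (1 : ℝ))
  ext s
  simp only [Set.mem_ofPred_eq, Set.mem_singleton_iff]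
  constructor
  · rintro ⟨-, hs1, σ, hσ, hpsd⟩
    by_contra hne
    have hs : 0 < 1 - s := sub_pos.mpr (lt_of_le_of_ne hs1 hne)
    obtain ⟨c, ρ, τ, hc, hρ, hτ, hle⟩ := exists_product_le_of_sepState _ σ hσ _ hs hpsd
    have key := row_proportional_of_le_pure (psiU U) _ (hρ.1.kronecker hτ.1) c hc hle
    -- A state has trace one, hence a nonzero diagonal entry.
    have hdiag : ∀ {ρ : Matrix (Fin d) (Fin d) ℂ}, MatState ρ → ∃ a, ρ a a ≠ 0 := by
      intro ρ hρ
      by_contra! h0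
      have := hρ.2
      simp [Matrix.trace, h0] at this
    obtain ⟨a, ha⟩ := hdiag hρ
    obtain ⟨b, hb⟩ := hdiag hτ
    have hd0 : (Real.sqrt d : ℂ) ≠ 0 := by
      have : (0 : ℝ) < d := by exact_mod_cast (by omega : 0 < d)
      exact_mod_cast (Real.sqrt_pos.mpr this).ne'
    have hU1 : Uᴴᵀ = Matrix.vecMulVec (fun b' => τ b b' / (ρ a a * τ b b) * star (U b a))
        (fun a' => ρ a a') := by
      ext b' a'
      have h := key (a, b) (a', b') (a, b)
      simp only [Matrix.kroneckerMap_apply, psiU, star_mul'] at h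
      have h' : ρ a a * τ b b * star (U b' a') = ρ a a' * τ b b' * star (U b a) :=
        mul_left_cancel₀ (star_ne_zero.mpr (one_div_ne_zero hd0)) (by linear_combination h)
      simp only [Matrix.transpose_apply, Matrix.conjTranspose_apply, Matrix.vecMulVec_apply]
      field_simp
      linear_combination h'
    have hrank : Uᴴᵀ.rank = d := by
      have hu : IsUnit U := (Unitary.toUnits ⟨U, hU⟩).isUnit
      rw [Matrix.rank_transpose, Matrix.rank_conjTranspose, Matrix.rank_of_isUnit U hu,
        Fintype.card_fin]
    have := Matrix.rank_vecMulVec_le (fun b' => τ b b' / (ρ a a * τ b b) * star (U b a))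
        (fun a' => ρ a a')
    rw [← hU1, hrank] at this
    omega
  · rintro rfl
    let i : Fin d := ⟨0, by omega⟩
    refine ⟨zero_le_one, le_rfl, _, ⟨1, fun _ => 1, fun _ => _, fun _ => _, fun _ => zero_le_one,
      by simp, fun _ => matState_single i, fun _ => matState_single i, rfl⟩, ?_⟩
    simpa using Matrix.posSemidef_vecMulVec_self_star (psiU U)
end

section
/- Weight-based measure of the depolarizing channel: for p ∈ [0,1], let J_p = p·P_{Ψ⁺} + (1−p)·(1/4)·I₄ be the state on ℂ² ⊗ ℂ², where P_{Ψ⁺} is the projector onto the maximally entangled vector Ψ⁺ = (e₀⊗e₀ + e₁⊗e₁)/√2 (this J_p is the Choi state of the qubit depolarizing channel Δ_p(ρ) = p·ρ + (1−p)·I/2). Then C_w(J_p) = (3p−1)/2 if p ∈ [1/3, 1], and C_w(J_p) = 0 if p ∈ [0, 1/3). -/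
/-!
For `0 ≤ q ≤ 1/3` the Choi state is `J_q = (1 + q (X⊗X - Y⊗Y + Z⊗Z)) / 4` with the Pauli matrices,
and it is separable: it is the uniform mixture of the six products
`(1 ± A)/2 ⊗ (1 ± 3 q A')/2` with `(A, A') = (X, X), (Y, -Y), (Z, Z)` (`sepState_choiDepol`).
This settles `p < 1/3` with `s = 0`. For `p ≥ 1/3` and `s = (3 p - 1)/2` one has
`J_p - (1 - s) J_{1/3} = s P_{Ψ⁺} ⪰ 0`, which gives the upper bound.

The lower bound is by duality with the witness `2 (1 - P_{Ψ⁺})`, a positive semidefinite matrix.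
Its expectation is `3 (1 - p)/2` in `J_p` and at least `1` in every separable state
(`one_le_witness_of_sepState`), so `J_p ⪰ (1 - s) σ` with `σ` separable forces
`1 - s ≤ 3 (1 - p)/2`. The separable bound for a product `ρ ⊗ τ` is the
nonnegativity of `ρ ⊗ τᵀ` on the singlet vector.
-/

open Matrix BigOperators
open scoped ComplexOrder

/-- The canonical two-qubit maximally entangled state vector `Ψ⁺ = (e₀⊗e₀ + e₁⊗e₁)/√2`. -/
noncomputable def psiPlus2 : Fin 2 × Fin 2 → ℂ :=
  fun p => if p.1 = p.2 then 1 / (Real.sqrt 2 : ℂ) else 0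

/-- The projector onto `Ψ⁺`. -/
noncomputable def projPsiPlus2 : Matrix (Fin 2 × Fin 2) (Fin 2 × Fin 2) ℂ :=
  Matrix.of fun p q => psiPlus2 p * (starRingEnd ℂ) (psiPlus2 q)

/-- The Choi state of the qubit depolarizing channel `Δ_p`. -/
noncomputable def choiDepol (p : ℝ) : Matrix (Fin 2 × Fin 2) (Fin 2 × Fin 2) ℂ :=
  (p : ℂ) • projPsiPlus2 + ((1 - p : ℝ) : ℂ) • ((4 : ℂ)⁻¹ • (1 : Matrix (Fin 2 × Fin 2) (Fin 2 × Fin 2) ℂ))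

/-- The Pauli matrix `X`. -/
def pauliX : Matrix (Fin 2) (Fin 2) ℂ := !![0, 1; 1, 0]

/-- The Pauli matrix `Y`. -/
def pauliY : Matrix (Fin 2) (Fin 2) ℂ := !![0, -Complex.I; Complex.I, 0]

/-- The Pauli matrix `Z`. -/
def pauliZ : Matrix (Fin 2) (Fin 2) ℂ := !![1, 0; 0, -1]

/-- The qubit state `(1 + t A) / 2`, with Bloch vector of length `|t|` along the axis of the
observable `A`. -/
noncomputable def axisState (A : Matrix (Fin 2) (Fin 2) ℂ) (t : ℝ) : Matrix (Fin 2) (Fin 2) ℂ :=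
  (2⁻¹ : ℂ) • (1 + (t : ℂ) • A)

/-- `(1 + t A) / 2` is a nonnegative combination of `(1 + A)ᴴ (1 + A) = 2 (1 + A)` and
`(1 - A)ᴴ (1 - A) = 2 (1 - A)`. -/
lemma matState_axisState {A : Matrix (Fin 2) (Fin 2) ℂ} (hA : Aᴴ = A) (hA2 : A * A = 1)
    (htr : A.trace = 0) {t : ℝ} (h1 : -1 ≤ t) (h2 : t ≤ 1) : MatState (axisState A t) := by
  constructor
  · have e : axisState A t = (((1 + t) / 8 : ℝ) : ℂ) • ((1 + A)ᴴ * (1 + A))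
        + (((1 - t) / 8 : ℝ) : ℂ) • ((1 - A)ᴴ * (1 - A)) := by
      simp only [axisState, conjTranspose_add, conjTranspose_sub, conjTranspose_one, hA,
        mul_add, add_mul, mul_sub, sub_mul, hA2, one_mul, mul_one]
      push_cast
      module
    rw [e]
    refine ((posSemidef_conjTranspose_mul_self _).smul ?_).add
      ((posSemidef_conjTranspose_mul_self _).smul ?_)
    · exact Complex.zero_le_real.mpr (by linarith)
    · exact Complex.zero_le_real.mpr (by linarith)
  · simp [axisState, trace_add, trace_smul, htr]

lemma matState_pauliX {t : ℝ} (h1 : -1 ≤ t) (h2 : t ≤ 1) : MatState (axisState pauliX t) := by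
  refine matState_axisState ?_ ?_ ?_ h1 h2
  · ext i j; fin_cases i <;> fin_cases j <;> simp [pauliX]
  · ext i j; fin_cases i <;> fin_cases j <;> simp [pauliX]
  · simp [pauliX, trace_fin_two]

lemma matState_pauliY {t : ℝ} (h1 : -1 ≤ t) (h2 : t ≤ 1) : MatState (axisState pauliY t) := by
  refine matState_axisState ?_ ?_ ?_ h1 h2
  · ext i j; fin_cases i <;> fin_cases j <;> simp [pauliY]
  · ext i j; fin_cases i <;> fin_cases j <;> simp [pauliY]
  · simp [pauliY, trace_fin_two]

lemma matState_pauliZ {t : ℝ} (h1 : -1 ≤ t) (h2 : t ≤ 1) : MatState (axisState pauliZ t) := by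
  refine matState_axisState ?_ ?_ ?_ h1 h2
  · ext i j; fin_cases i <;> fin_cases j <;> simp [pauliZ]
  · ext i j; fin_cases i <;> fin_cases j <;> simp [pauliZ]
  · simp [pauliZ, trace_fin_two]

lemma projPsiPlus2_apply (a b c d : Fin 2) :
    projPsiPlus2 (a, b) (c, d) = if a = b ∧ c = d then 2⁻¹ else 0 := by
  have h : ((Real.sqrt 2 : ℝ) : ℂ)⁻¹ * ((Real.sqrt 2 : ℝ) : ℂ)⁻¹ = 2⁻¹ := by
    rw [← mul_inv, ← Complex.ofReal_mul, Real.mul_self_sqrt (by norm_num)]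
    norm_num
  by_cases h1 : a = b <;> by_cases h2 : c = d <;> simp [projPsiPlus2, psiPlus2, h1, h2, h]

lemma posSemidef_projPsiPlus2 : projPsiPlus2.PosSemidef :=
  posSemidef_vecMulVec_self_star psiPlus2

lemma sepState_choiDepol {q : ℝ} (h0 : 0 ≤ q) (h1 : q ≤ 1 / 3) : SepState (choiDepol q) := by
  have a1 : (-1 : ℝ) ≤ 3 * q := by linarith
  have a2 : 3 * q ≤ 1 := by linarith
  have a3 : -1 ≤ -(3 * q) := by linarith
  have a4 : -(3 * q) ≤ 1 := by linarith
  refine ⟨6, fun _ => 1 / 6,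
    ![axisState pauliX 1, axisState pauliX (-1), axisState pauliY 1, axisState pauliY (-1),
      axisState pauliZ 1, axisState pauliZ (-1)],
    ![axisState pauliX (3 * q), axisState pauliX (-(3 * q)), axisState pauliY (-(3 * q)),
      axisState pauliY (3 * q), axisState pauliZ (3 * q), axisState pauliZ (-(3 * q))],
    fun _ => by norm_num, by norm_num, ?_, ?_, ?_⟩
  · intro i
    fin_cases i
    · exact matState_pauliX (by norm_num) (by norm_num)
    · exact matState_pauliX (by norm_num) (by norm_num)
    · exact matState_pauliY (by norm_num) (by norm_num)
    · exact matState_pauliY (by norm_num) (by norm_num)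
    · exact matState_pauliZ (by norm_num) (by norm_num)
    · exact matState_pauliZ (by norm_num) (by norm_num)
  · intro i
    fin_cases i
    · exact matState_pauliX a1 a2
    · exact matState_pauliX a3 a4
    · exact matState_pauliY a3 a4
    · exact matState_pauliY a1 a2
    · exact matState_pauliZ a1 a2
    · exact matState_pauliZ a3 a4
  · ext ⟨a, b⟩ ⟨c, d⟩
    simp only [choiDepol, Matrix.add_apply, Matrix.smul_apply, projPsiPlus2_apply,
      Fin.sum_univ_six]
    fin_cases a <;> fin_cases b <;> fin_cases c <;> fin_cases d <;>
      simp [axisState, pauliX, pauliY, pauliZ] <;> ring_nf <;> simp <;> ring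

/-- The trace of `M` against the witness `2 (1 - P_{Ψ⁺})`. -/
noncomputable def witness (M : Matrix (Fin 2 × Fin 2) (Fin 2 × Fin 2) ℂ) : ℂ :=
  2 * M (0, 1) (0, 1) + 2 * M (1, 0) (1, 0)
    + (M (0, 0) (0, 0) - M (0, 0) (1, 1) - M (1, 1) (0, 0) + M (1, 1) (1, 1))

/-- The last summand is the quadratic form of `M` at `e₀ ⊗ e₀ - e₁ ⊗ e₁`. -/
lemma witness_nonneg {M : Matrix (Fin 2 × Fin 2) (Fin 2 × Fin 2) ℂ} (hM : M.PosSemidef) :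
    0 ≤ witness M := by
  have h1 := hM.diag_nonneg (i := (0, 1))
  have h2 := hM.diag_nonneg (i := (1, 0))
  have h3 := hM.dotProduct_mulVec_nonneg (fun x => !![(1 : ℂ), 0; 0, -1] x.1 x.2)
  have e : (star (fun x : Fin 2 × Fin 2 => !![(1 : ℂ), 0; 0, -1] x.1 x.2)) ⬝ᵥ
      (M *ᵥ (fun x => !![(1 : ℂ), 0; 0, -1] x.1 x.2)) =
      M (0, 0) (0, 0) - M (0, 0) (1, 1) - M (1, 1) (0, 0) + M (1, 1) (1, 1) := by
    simp [dotProduct, mulVec, Fintype.sum_prod_type]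
    ring
  rw [e] at h3
  exact add_nonneg (add_nonneg (mul_nonneg zero_le_two h1) (mul_nonneg zero_le_two h2)) h3

/-- Subtracting `tr ρ · tr τ = 1` from the witness leaves the quadratic form of the positive
semidefinite matrix `ρ ⊗ τᵀ` at `e₀ ⊗ e₁ - e₁ ⊗ e₀`. -/
lemma one_le_witness_kronecker {ρ τ : Matrix (Fin 2) (Fin 2) ℂ} (hρ : MatState ρ)
    (hτ : MatState τ) : 1 ≤ witness (kroneckerMap (· * ·) ρ τ) := by
  have h := (hρ.1.kronecker hτ.1.transpose).dotProduct_mulVec_nonneg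
    (fun x => !![(0 : ℂ), 1; -1, 0] x.1 x.2)
  have t1 : ρ 0 0 + ρ 1 1 = 1 := by rw [← trace_fin_two]; exact hρ.2
  have t2 : τ 0 0 + τ 1 1 = 1 := by rw [← trace_fin_two]; exact hτ.2
  have e : (star (fun x : Fin 2 × Fin 2 => !![(0 : ℂ), 1; -1, 0] x.1 x.2)) ⬝ᵥ
      (kroneckerMap (· * ·) ρ τᵀ *ᵥ (fun x => !![(0 : ℂ), 1; -1, 0] x.1 x.2)) =
      witness (kroneckerMap (· * ·) ρ τ) - (ρ 0 0 + ρ 1 1) * (τ 0 0 + τ 1 1) := by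
    simp [dotProduct, mulVec, Fintype.sum_prod_type, witness]
    ring
  rw [e, t1, t2, one_mul] at h
  exact sub_nonneg.mp h

lemma one_le_witness_of_sepState {σ : Matrix (Fin 2 × Fin 2) (Fin 2 × Fin 2) ℂ}
    (hσ : SepState σ) : 1 ≤ witness σ := by
  obtain ⟨k, p, ρ, τ, hp, hp1, hρ, hτ, rfl⟩ := hσ
  have e : witness (∑ i, (p i : ℂ) • kroneckerMap (· * ·) (ρ i) (τ i)) =
      ∑ i, (p i : ℂ) * witness (kroneckerMap (· * ·) (ρ i) (τ i)) := by
    simp only [witness, Matrix.sum_apply, Matrix.smul_apply, smul_eq_mul, Finset.mul_sum,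
      ← Finset.sum_add_distrib, ← Finset.sum_sub_distrib]
    exact Finset.sum_congr rfl fun i _ => by ring
  rw [e]
  calc (1 : ℂ) = ∑ i, (p i : ℂ) * 1 := by simp [← Complex.ofReal_sum, hp1]
    _ ≤ _ := Finset.sum_le_sum fun i _ => mul_le_mul_of_nonneg_left
      (one_le_witness_kronecker (hρ i) (hτ i)) (Complex.zero_le_real.mpr (hp i))

lemma witness_choiDepol (p : ℝ) : witness (choiDepol p) = ((3 * (1 - p) / 2 : ℝ) : ℂ) := by
  simp [witness, choiDepol, projPsiPlus2_apply]
  ring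

lemma le_of_sub_posSemidef {p s : ℝ} (hs : s ≤ 1)
    {σ : Matrix (Fin 2 × Fin 2) (Fin 2 × Fin 2) ℂ} (hσ : SepState σ)
    (h : (choiDepol p - ((1 - s : ℝ) : ℂ) • σ).PosSemidef) : (3 * p - 1) / 2 ≤ s := by
  have h1 := witness_nonneg h
  have e : witness (choiDepol p - ((1 - s : ℝ) : ℂ) • σ) =
      witness (choiDepol p) - ((1 - s : ℝ) : ℂ) * witness σ := by
    simp only [witness, Matrix.sub_apply, Matrix.smul_apply, smul_eq_mul]
    ring
  rw [e, witness_choiDepol] at h1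
  have h2 : ((1 - s : ℝ) : ℂ) * 1 ≤ ((1 - s : ℝ) : ℂ) * witness σ :=
    mul_le_mul_of_nonneg_left (one_le_witness_of_sepState hσ)
      (Complex.zero_le_real.mpr (by linarith))
  have h3 := h2.trans (sub_nonneg.mp h1)
  rw [mul_one, Complex.real_le_real] at h3
  linarith

/-- the weight-based measure of the depolarizing channel is
`(3p−1)/2` for `p ∈ [1/3, 1]` and `0` for `p ∈ [0, 1/3)`. -/
theorem weight_measure_depolarizing (p : ℝ) (hp0 : 0 ≤ p) (hp1 : p ≤ 1) :
    (1 / 3 ≤ p → Cw (choiDepol p) = (3 * p - 1) / 2) ∧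
    (p < 1 / 3 → Cw (choiDepol p) = 0) := by
  constructor
  · intro hp
    refine IsLeast.csInf_eq ⟨⟨by linarith, by linarith, choiDepol (1 / 3),
      sepState_choiDepol (by norm_num) le_rfl, ?_⟩, ?_⟩
    · have e : choiDepol p - ((1 - (3 * p - 1) / 2 : ℝ) : ℂ) • choiDepol (1 / 3) =
          (((3 * p - 1) / 2 : ℝ) : ℂ) • projPsiPlus2 := by
        simp only [choiDepol]
        push_cast
        module
      rw [e]
      exact posSemidef_projPsiPlus2.smul (Complex.zero_le_real.mpr (by linarith))
    · rintro s ⟨-, hs1, σ, hσ, h⟩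
      exact le_of_sub_posSemidef hs1 hσ h
  · intro hp
    refine IsLeast.csInf_eq ⟨⟨le_rfl, zero_le_one, choiDepol p,
      sepState_choiDepol hp0 hp.le, ?_⟩, fun s hs => hs.1⟩
    simpa using PosSemidef.zero
end

section
/- Separability of the threshold Werner state: the two-qubit state σ* = (1/3)·P_{Ψ⁺} + (1/6)·I₄ on ℂ² ⊗ ℂ², where P_{Ψ⁺} is the projector onto Ψ⁺ = (e₀⊗e₀ + e₁⊗e₁)/√2 and I₄ is the identity on ℂ² ⊗ ℂ², is a separable state. -/
/-!
The six pure states `P` with Bloch vectors `±e_x, ±e_y, ±e_z` (the eigenprojections of the Pauli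
matrices) give the decomposition `σ* = (1/6) ∑ P ⊗ Pᵀ`. Indeed, for a Pauli matrix `S` the two
eigenprojections `(1 ± S)/2` contribute `(1 + S ⊗ Sᵀ)/2`, and
`∑ S ⊗ Sᵀ = 4 P_{Ψ⁺} - 1` over the three Pauli matrices, so the sum is `1 + 2 P_{Ψ⁺}`.
-/

open Matrix BigOperators
open scoped ComplexOrder

/-- The qubit matrix `(1 + x X + y Y + z Z) / 2` with Bloch vector `(x, y, z)`. -/
noncomputable def bloch (x y z : ℝ) : Matrix (Fin 2) (Fin 2) ℂ :=
  !![(1 + z) / 2, (x - y * Complex.I) / 2; (x + y * Complex.I) / 2, (1 - z) / 2]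

/-- A unit Bloch vector gives a state: the matrix is then an orthogonal projection, so it has the
form `Mᴴ * M`. -/
lemma matState_bloch {x y z : ℝ} (h : x ^ 2 + y ^ 2 + z ^ 2 = 1) : MatState (bloch x y z) := by
  have hc : (x : ℂ) ^ 2 + (y : ℂ) ^ 2 + (z : ℂ) ^ 2 = 1 := by exact_mod_cast h
  have hI := Complex.I_sq
  have h2 : (starRingEnd ℂ) 2 = 2 := map_ofNat _ 2
  constructor
  · have e : bloch x y z = (bloch x y z)ᴴ * bloch x y z := by
      ext i j
      fin_cases i <;> fin_cases j <;>
        simp [bloch, Matrix.mul_apply, Fin.sum_univ_two, h2] <;>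
        first
          | ring1
          | linear_combination (-1 / 4 : ℂ) * hc + (y : ℂ) ^ 2 / 4 * hI
    rw [e]
    exact Matrix.posSemidef_conjTranspose_mul_self _
  · simp [bloch, Matrix.trace, Fin.sum_univ_two]
    ring

lemma projPsiPlus2_apply_s12 (p q : Fin 2 × Fin 2) :
    projPsiPlus2 p q = if p.1 = p.2 ∧ q.1 = q.2 then 1 / 2 else 0 := by
  have h : ((Real.sqrt 2 : ℂ))⁻¹ * (Real.sqrt 2 : ℂ)⁻¹ = 2⁻¹ := by
    rw [← mul_inv]
    congr 1
    exact_mod_cast Real.mul_self_sqrt (by norm_num : (0 : ℝ) ≤ 2)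
  by_cases hp : p.1 = p.2 <;> by_cases hq : q.1 = q.2 <;>
    simp [projPsiPlus2, psiPlus2, hp, hq, h]

/-- the threshold Werner state `(1/3)·P_{Ψ⁺} + (1/6)·I₄` is separable. -/
theorem threshold_werner_separable :
    SepState ((3 : ℂ)⁻¹ • projPsiPlus2 +
      (6 : ℂ)⁻¹ • (1 : Matrix (Fin 2 × Fin 2) (Fin 2 × Fin 2) ℂ)) := by
  -- Negating the `y` coordinate transposes the matrix, so the second factors are `Pᵀ`.
  refine ⟨6, fun _ => 1 / 6,
    ![bloch 1 0 0, bloch (-1) 0 0, bloch 0 1 0, bloch 0 (-1) 0, bloch 0 0 1, bloch 0 0 (-1)],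
    ![bloch 1 0 0, bloch (-1) 0 0, bloch 0 (-1) 0, bloch 0 1 0, bloch 0 0 1, bloch 0 0 (-1)],
    fun _ => by norm_num, by norm_num, ?_, ?_, ?_⟩
  · intro i
    fin_cases i <;> exact matState_bloch (by norm_num)
  · intro i
    fin_cases i <;> exact matState_bloch (by norm_num)
  · have hI := Complex.I_mul_I
    ext ⟨a, b⟩ ⟨c, d⟩
    fin_cases a <;> fin_cases b <;> fin_cases c <;> fin_cases d <;>
      simp [Fin.sum_univ_succ, bloch, projPsiPlus2_apply_s12] <;>
      grind
end
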